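/- Every minor of the graph G(δ,k) has edge density strictly less than δ + 2; that is, the minor density satisfies δ(G(δ,k)) < δ + 2. -/

import Mathlib

open SimpleGraph

/-- Vertex type of the lower-bound graph `G(δ,k)`: the top path has `(δ-1)k+1` vertices
`p`, and there is a `((δ-1)D+1) × ((δ-1)D+1)` grid of vertices `v_{i,j}`, where `D = kδ`. -/
abbrev GDKVert (δ k : ℕ) : Type :=
  Fin ((δ - 1) * k + 1) ⊕ (Fin ((δ - 1) * (k * δ) + 1) × Fin ((δ - 1) * (k * δ) + 1))

/-- The lower-bound graph `G(δ,k)` (indices zero-based, `D = kδ`): the `p`-vertices form a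
path (the top path); each row `v_{i,·}` forms a path; each column `v_{·,c}` with `D ∣ c`
forms a path; and `v_{r,c}` is adjacent to `p_q` whenever `D ∣ r`, `D ∣ c` and
`q·D = c·k` (i.e. `q = (c/D)·k`). -/
def GDK (δ k : ℕ) : SimpleGraph (GDKVert δ k) :=
  SimpleGraph.fromRel (fun x y =>
    match x, y with
    | Sum.inl a, Sum.inl b => (b : ℕ) = (a : ℕ) + 1
    | Sum.inr ⟨i, j⟩, Sum.inr ⟨i', j'⟩ =>
        (i = i' ∧ (j' : ℕ) = (j : ℕ) + 1) ∨
        (j = j' ∧ (k * δ) ∣ (j : ℕ) ∧ (i' : ℕ) = (i : ℕ) + 1)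
    | Sum.inr ⟨i, j⟩, Sum.inl p =>
        (k * δ) ∣ (i : ℕ) ∧ (k * δ) ∣ (j : ℕ) ∧ (p : ℕ) * (k * δ) = (j : ℕ) * k
    | Sum.inl _, Sum.inr _ => False)

/-- `H` is a minor of `G`. -/
def IsMinor {V W : Type} (G : SimpleGraph V) (H : SimpleGraph W) : Prop :=
  ∃ f : W → Set V,
    (∀ w, (f w).Nonempty) ∧
    (∀ w, (G.induce (f w)).Connected) ∧
    (Pairwise fun w₁ w₂ => Disjoint (f w₁) (f w₂)) ∧
    (∀ w₁ w₂, H.Adj w₁ w₂ → ∃ u ∈ f w₁, ∃ v ∈ f w₂, G.Adj u v)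

/-- The minor density `δ(G)`: the supremum of `|E'| / |V'|` over all minors `H = (V', E')`
of `G`. -/
noncomputable def minorDensity {V : Type} [Fintype V] (G : SimpleGraph V) : ℝ :=
  sSup {d : ℝ | ∃ (W : Type) (_ : Fintype W) (H : SimpleGraph W),
    IsMinor G H ∧ d = (Nat.card H.edgeSet : ℝ) / (Nat.card W : ℝ)}

/-!
Deleting the at most `δ - 1` vertices `p_{mk}`, `m ≥ 1`, of the top path that have neighbours in the
rows leaves a minor of the infinite grid on a quadrant: the first column of the quadrant is
contracted to `p_0`, which is thereby joined to the first vertex of every row. In place of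
planarity we use Whitney's abstract duals over `ZMod 2`, whose cuts are the cycles of the graph: the
quadrant grid has one by inspection, and deletion and contraction are dual operations, so a minor
inherits one. In a finite graph with an abstract dual the face boundaries span the cycle space, a
nonzero cycle has at least three edges and every edge lies on at most two faces, whence
`e ≤ 3 n - 3`, as in Euler's formula. Each deleted vertex lies in at most one branch set of a minor
with `n` vertices, and putting a branch set back costs at most `n - 1` edges, so the edge density is
less than `(δ - 1) + 3 = δ + 2`.
-/

section Chains

variable {V : Type*} (G : SimpleGraph V) [G.LocallyFinite]

/-- The boundary modulo `2` of a (possibly infinite) 1-chain of a locally finite graph. Chains are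
functions on all of `Sym2 V`; their values off the edges of `G` play no role. -/
def chainBoundary : (Sym2 V → ZMod 2) →ₗ[ZMod 2] V → ZMod 2 where
  toFun c v := ∑ w ∈ G.neighborFinset v, c s(v, w)
  map_add' c d := by ext; simp [Finset.sum_add_distrib]
  map_smul' a c := by ext; simp [Finset.mul_sum]

variable {G}

lemma chainBoundary_apply (c : Sym2 V → ZMod 2) (v : V) :
    chainBoundary G c v = ∑ w ∈ G.neighborFinset v, c s(v, w) := rfl

lemma chainBoundary_congr {c d : Sym2 V → ZMod 2} (h : ∀ e ∈ G.edgeSet, c e = d e) :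
    chainBoundary G c = chainBoundary G d := by
  ext v
  exact Finset.sum_congr rfl fun w hw ↦ h _ (by simpa using hw)

lemma chainBoundary_single [DecidableEq V] {u v : V} (h : G.Adj u v) :
    chainBoundary G (Pi.single s(u, v) 1) = Pi.single u 1 + Pi.single v 1 := by
  ext x
  have huv := h.ne
  rw [chainBoundary_apply, Pi.add_apply]
  by_cases hu : x = u
  · subst hu
    simp [Pi.single_apply, h, huv]
  by_cases hv : x = v
  · subst hv
    simp [Pi.single_apply, Sym2.eq_swap (a := u), h.symm, hu]
  · simp [hu, hv]

lemma chainBoundary_count_edges [DecidableEq V] {u v : V} (p : G.Walk u v) :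
    chainBoundary G (fun e ↦ (p.edges.count e : ZMod 2)) = Pi.single u 1 + Pi.single v 1 := by
  induction p with
  | nil => ext; simp [chainBoundary_apply, CharTwo.add_self_eq_zero]
  | @cons u w v h p ih =>
    have hsplit : (fun e ↦ ((p.cons h).edges.count e : ZMod 2)) =
        (fun e ↦ (p.edges.count e : ZMod 2)) + Pi.single s(u, w) 1 := by
      ext e
      simp [List.count_cons, Pi.single_apply, eq_comm (a := e)]
    rw [hsplit, map_add, ih, chainBoundary_single h]
    ext x
    simp only [Pi.add_apply]
    grind

/-- Summing the boundary over `S`, the edges inside `S` are counted twice, hence cancel. -/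
lemma sum_chainBoundary [DecidableEq V] (c : Sym2 V → ZMod 2) (S : Finset V) :
    ∑ v ∈ S, chainBoundary G c v = ∑ v ∈ S, ∑ u ∈ G.neighborFinset v \ S, c s(v, u) := by
  have hinner : ∑ v ∈ S, ∑ u ∈ G.neighborFinset v ∩ S, c s(v, u) = 0 := by
    rw [Finset.sum_sigma']
    refine Finset.sum_involution (fun p _ ↦ ⟨p.2, p.1⟩) ?_ ?_ ?_ ?_
    · rintro ⟨v, u⟩ -
      rw [Sym2.eq_swap, CharTwo.add_self_eq_zero]
    · rintro ⟨v, u⟩ h - heq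
      obtain rfl : u = v := congrArg Sigma.fst heq
      simp at h
    · rintro ⟨v, u⟩ h
      simp only [Finset.mem_sigma, Finset.mem_inter, mem_neighborFinset] at h ⊢
      exact ⟨h.2.2, h.2.1.symm, h.1⟩
    · simp
  calc ∑ v ∈ S, chainBoundary G c v
      = ∑ v ∈ S, (∑ u ∈ G.neighborFinset v ∩ S, c s(v, u) +
          ∑ u ∈ G.neighborFinset v \ S, c s(v, u)) :=
        Finset.sum_congr rfl fun v _ ↦ (Finset.sum_inter_add_sum_sdiff _ _ _).symm
    _ = ∑ v ∈ S, ∑ u ∈ G.neighborFinset v \ S, c s(v, u) := by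
        rw [Finset.sum_add_distrib, hinner, zero_add]

/-- Join every vertex of `S` to a fixed root of `S` by a path inside `S`. -/
lemma exists_chainBoundary_eq {S : Finset V} (hS : (G.induce (S : Set V)).Preconnected)
    {t : V → ZMod 2} (ht : ∀ v ∉ S, t v = 0) (hsum : ∑ v ∈ S, t v = 0) :
    ∃ c : Sym2 V → ZMod 2, (∀ e, c e ≠ 0 → ∀ v ∈ e, v ∈ S) ∧ chainBoundary G c = t := by
  classical
  obtain rfl | ⟨r, hr⟩ := S.eq_empty_or_nonempty
  · exact ⟨0, by simp, by ext v; simp [ht v (Finset.notMem_empty v)]⟩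
  have hpath : ∀ v ∈ S, ∃ p : G.Walk v r, ∀ e ∈ p.edges, ∀ x ∈ e, x ∈ S := by
    intro v hv
    obtain ⟨p⟩ := hS ⟨v, hv⟩ ⟨r, hr⟩
    refine ⟨p.map (Embedding.induce (S : Set V)).toHom, fun e he x hx ↦ ?_⟩
    have hx' := Walk.mem_support_of_mem_edges he hx
    obtain ⟨y, -, rfl⟩ := List.mem_map.1 (Walk.support_map _ p ▸ hx')
    exact y.2
  choose p hp using hpath
  refine ⟨∑ v : S, t v • fun e ↦ ((p v v.2).edges.count e : ZMod 2), fun e he x hx ↦ ?_, ?_⟩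
  · rw [Finset.sum_apply] at he
    obtain ⟨v, -, hv⟩ := Finset.exists_ne_zero_of_sum_ne_zero he
    refine hp v v.2 e (List.count_pos_iff.1 (Nat.pos_of_ne_zero fun h ↦ hv ?_)) x hx
    simp [h]
  · have hroot : ∑ v : S, t v • Pi.single r (1 : ZMod 2) = (0 : V → ZMod 2) := by
      rw [← Finset.sum_smul, Finset.sum_coe_sort S t, hsum, zero_smul]
    simp only [map_sum, map_smul, chainBoundary_count_edges, smul_add, Finset.sum_add_distrib,
      hroot, add_zero]
    ext x
    rw [Finset.sum_apply, Finset.sum_coe_sort S fun v ↦ (t v • Pi.single v (1 : ZMod 2)) x]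
    by_cases hx : x ∈ S <;> simp [Pi.single_apply, hx, ht]

end Chains

section CycleSpace

variable {V : Type*} (G : SimpleGraph V) [G.LocallyFinite]

/-- The cycle space of `G` over `ZMod 2`; a chain on the edges is extended by zero to `Sym2 V` in
order to take its boundary. -/
noncomputable def cycleSpace : Submodule (ZMod 2) (G.edgeSet → ZMod 2) :=
  (chainBoundary G ∘ₗ Function.ExtendByZero.linearMap (ZMod 2) Subtype.val).ker

variable {G}

lemma restrict_mem_cycleSpace_iff {c : Sym2 V → ZMod 2} :
    (fun e : G.edgeSet ↦ c e) ∈ cycleSpace G ↔ chainBoundary G c = 0 := by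
  have hext : chainBoundary G (Function.extend Subtype.val (fun e : G.edgeSet ↦ c e) 0) =
      chainBoundary G c :=
    chainBoundary_congr fun e he ↦
      Subtype.val_injective.extend_apply _ (0 : Sym2 V → ZMod 2) ⟨e, he⟩
  rw [cycleSpace, LinearMap.mem_ker, ← hext]
  rfl

lemma exists_adj_ne_of_chainBoundary_eq_zero {c : Sym2 V → ZMod 2} (hc : chainBoundary G c = 0)
    {u v : V} (huv : G.Adj u v) (hne : c s(u, v) ≠ 0) :
    ∃ w, G.Adj u w ∧ w ≠ v ∧ c s(u, w) ≠ 0 := by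
  by_contra! hall
  refine hne ?_
  rw [← Finset.sum_eq_single_of_mem (f := fun w ↦ c s(u, w)) v
    ((G.mem_neighborFinset u v).2 huv) fun w hw ↦ hall w (by simpa using hw)]
  exact congrFun hc u

/-- Both ends of an edge of a nonzero cycle lie on a further edge of it, and these two are distinct
because `G` is simple. -/
lemma three_le_card_support_of_mem_cycleSpace [Fintype G.edgeSet] {c : G.edgeSet → ZMod 2}
    (hc : c ∈ cycleSpace G) (hne : c ≠ 0) : 3 ≤ Finset.card {e | c e ≠ 0} := by
  classical
  obtain ⟨d, rfl⟩ : ∃ d : Sym2 V → ZMod 2, (fun e : G.edgeSet ↦ d e) = c :=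
    ⟨Function.extend Subtype.val c 0, funext fun e ↦ Subtype.val_injective.extend_apply c 0 e⟩
  rw [restrict_mem_cycleSpace_iff] at hc
  obtain ⟨⟨e, he⟩, hde⟩ := Function.ne_iff.1 hne
  induction e with | _ u v
  have huv : G.Adj u v := he
  obtain ⟨w, huw, hwv, hdw⟩ := exists_adj_ne_of_chainBoundary_eq_zero hc huv hde
  obtain ⟨x, hvx, hxu, hdx⟩ := exists_adj_ne_of_chainBoundary_eq_zero hc huv.symm
    (by rwa [Sym2.eq_swap])
  refine Finset.two_lt_card.2 ⟨⟨s(u, v), he⟩, by simpa using hde, ⟨s(u, w), huw⟩,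
    by simpa using hdw, ⟨s(v, x), hvx⟩, by simpa using hdx, ?_, ?_, ?_⟩ <;>
  · have := huw.ne
    have := hvx.ne
    have := huv.ne
    grind [Sym2.eq_iff]

/-- The boundaries of single vertices sum to zero, so the boundary map has rank less than `#V`. -/
lemma card_edgeSet_lt_add_finrank_cycleSpace [Finite V] [Nonempty V] :
    Nat.card G.edgeSet < Nat.card V + Module.finrank (ZMod 2) (cycleSpace G) := by
  classical
  have := Fintype.ofFinite V
  have := Fintype.ofFinite G.edgeSet
  obtain ⟨v⟩ := ‹Nonempty V›
  set D := chainBoundary G ∘ₗ Function.ExtendByZero.linearMap (ZMod 2) (Subtype.val : G.edgeSet → _)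
  have hrange : D.range ≠ ⊤ := by
    intro htop
    obtain ⟨c, hc⟩ := LinearMap.range_eq_top.1 htop (Pi.single v 1)
    have hsum := sum_chainBoundary (G := G) (Function.extend Subtype.val c 0) Finset.univ
    have hc' : chainBoundary G (Function.extend Subtype.val c 0) = Pi.single v 1 := hc
    simp [hc', Finset.sdiff_eq_empty_iff_subset.2 (Finset.subset_univ _)] at hsum
  have hlt := Submodule.finrank_lt hrange
  have hrank := D.finrank_range_add_finrank_ker
  rw [Module.finrank_fintype_fun_eq_card] at hlt hrank
  rw [Nat.card_eq_fintype_card, Nat.card_eq_fintype_card, ← hrank]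
  exact Nat.add_lt_add_right hlt _

lemma three_mul_finrank_cycleSpace_le [Finite G.edgeSet] (B : Finset (G.edgeSet → ZMod 2))
    (hB : ∀ c ∈ B, c ∈ cycleSpace G) (hspan : cycleSpace G ≤ Submodule.span (ZMod 2) B)
    (htwo : ∀ e, Finset.card {c ∈ B | c e ≠ 0} ≤ 2) :
    3 * Module.finrank (ZMod 2) (cycleSpace G) ≤ 2 * Nat.card G.edgeSet := by
  classical
  have := Fintype.ofFinite G.edgeSet
  have hcount : (B.erase 0).card * 3 ≤ Fintype.card G.edgeSet * 2 := by
    refine Finset.card_mul_le_card_mul (fun c e ↦ c e ≠ 0) (fun c hc ↦ ?_) (fun e _ ↦ ?_)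
    · rw [Finset.mem_erase] at hc
      exact three_le_card_support_of_mem_cycleSpace (hB c hc.2) hc.1
    · exact (Finset.card_le_card (Finset.filter_subset_filter _ (B.erase_subset 0))).trans (htwo e)
  have hspan' : cycleSpace G ≤ Submodule.span (ZMod 2) (B.erase 0 : Finset _) := by
    rwa [Finset.coe_erase, Submodule.span_sdiff_singleton_zero]
  have hrank := (Submodule.finrank_mono hspan').trans (finrank_span_finset_le_card _)
  rw [Nat.card_eq_fintype_card]
  lia

end CycleSpace

section AbstractDual

universe u

variable {V F : Type u} (G : SimpleGraph V)

open Classical in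
/-- The chain of edges of `G` on the boundary of the face `K`, the edges with `K` on both sides
being left out. -/
noncomputable def faceBoundary (l r : Sym2 V → F) (K : F) :
    G.edgeSet → ZMod 2 :=
  fun e ↦ (Pi.single K 1 : F → ZMod 2) (l e) + (Pi.single K 1 : F → ZMod 2) (r e)

variable {G} in
lemma card_filter_faceBoundary_ne_zero_le_two [DecidableEq (G.edgeSet → ZMod 2)]
    {l r : Sym2 V → F} (S : Finset F) (e : G.edgeSet) :
    Finset.card {c ∈ S.image (faceBoundary G l r) | c e ≠ 0} ≤ 2 := by
  refine (Finset.card_le_card (t := {faceBoundary G l r (l e), faceBoundary G l r (r e)}) ?_).trans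
    Finset.card_le_two
  intro c hc
  obtain ⟨hc, hne⟩ := Finset.mem_filter.1 hc
  obtain ⟨K, -, rfl⟩ := Finset.mem_image.1 hc
  by_contra hK
  simp only [Finset.mem_insert, Finset.mem_singleton, not_or] at hK
  have hl : l e ≠ K := fun h ↦ hK.1 (by rw [h])
  have hr : r e ≠ K := fun h ↦ hK.2 (by rw [h])
  simp [faceBoundary, hl, hr] at hne

variable [G.LocallyFinite]

/-- Whitney's abstract duality over `ZMod 2`, for a dual (multi)graph on `F` whose edge dual to `e`
joins `l e` and `r e`: the cycles of `G` are the cuts of the dual. For infinite `G`, infinite cycles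
and cuts are included. -/
def IsAbstractDual (l r : Sym2 V → F) : Prop :=
  ∀ c : Sym2 V → ZMod 2, chainBoundary G c = 0 ↔
    ∃ x : F → ZMod 2, ∀ e ∈ G.edgeSet, c e = x (l e) + x (r e)

/-- Existence of an abstract dual, which for a finite graph is Whitney's criterion for
planarity. -/
def HasAbstractDual : Prop :=
  ∃ (F : Type u) (l r : Sym2 V → F), IsAbstractDual G l r

variable {G}

lemma IsAbstractDual.faceBoundary_mem_cycleSpace {l r : Sym2 V → F} (h : IsAbstractDual G l r)
    (K : F) : faceBoundary G l r K ∈ cycleSpace G := by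
  classical
  exact restrict_mem_cycleSpace_iff.2 ((h _).2 ⟨Pi.single K 1, fun _ _ ↦ rfl⟩)

lemma IsAbstractDual.mem_span_faceBoundary [Fintype G.edgeSet] [DecidableEq F] {l r : Sym2 V → F}
    (h : IsAbstractDual G l r) {c : G.edgeSet → ZMod 2} (hc : c ∈ cycleSpace G) :
    c ∈ Submodule.span (ZMod 2) (faceBoundary G l r ''
      (G.edgeFinset.image l ∪ G.edgeFinset.image r : Finset F)) := by
  classical
  obtain ⟨d, rfl⟩ : ∃ d : Sym2 V → ZMod 2, (fun e : G.edgeSet ↦ d e) = c :=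
    ⟨Function.extend Subtype.val c 0, funext fun e ↦ Subtype.val_injective.extend_apply c 0 e⟩
  obtain ⟨x, hx⟩ := (h d).1 (restrict_mem_cycleSpace_iff.1 hc)
  have hsum : (fun e : G.edgeSet ↦ d e) =
      ∑ K ∈ G.edgeFinset.image l ∪ G.edgeFinset.image r, x K • faceBoundary G l r K := by
    ext ⟨e, he⟩
    have hl : l e ∈ G.edgeFinset.image l ∪ G.edgeFinset.image r :=
      Finset.mem_union_left _ (Finset.mem_image_of_mem l (mem_edgeFinset.2 he))
    have hr : r e ∈ G.edgeFinset.image l ∪ G.edgeFinset.image r :=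
      Finset.mem_union_right _ (Finset.mem_image_of_mem r (mem_edgeFinset.2 he))
    simp only [Finset.sum_apply, Pi.smul_apply, smul_eq_mul, faceBoundary, mul_add,
      Finset.sum_add_distrib, Pi.single_apply, mul_ite, mul_one, mul_zero, Finset.sum_ite_eq,
      hl, hr, if_true]
    exact hx e he
  rw [hsum]
  exact Submodule.sum_mem _ fun K hK ↦
    Submodule.smul_mem _ _ (Submodule.subset_span (Set.mem_image_of_mem _ hK))

theorem HasAbstractDual.card_edgeSet_add_three_le [Finite V] [Nonempty V]
    (h : HasAbstractDual G) : Nat.card G.edgeSet + 3 ≤ 3 * Nat.card V := by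
  classical
  have := Fintype.ofFinite G.edgeSet
  obtain ⟨F, l, r, h⟩ := h
  have hrank := card_edgeSet_lt_add_finrank_cycleSpace (G := G)
  have hfaces := three_mul_finrank_cycleSpace_le
    ((G.edgeFinset.image l ∪ G.edgeFinset.image r).image (faceBoundary G l r))
    (fun c hc ↦ by
      obtain ⟨K, -, rfl⟩ := Finset.mem_image.1 hc
      exact h.faceBoundary_mem_cycleSpace K)
    (fun c hc ↦ by simpa only [Finset.coe_image] using h.mem_span_faceBoundary hc)
    (card_filter_faceBoundary_ne_zero_le_two _)
  lia

end AbstractDual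

section Minor

universe u

variable {V W : Type u}

/-- A model of `H` as a minor of `G` with finite branch sets, together with a choice, for each edge
`s(w, w')` of `H`, of an edge of `G` realizing it, whose end in the branch set of `w` is
`port w w'`. -/
structure MinorModel (G : SimpleGraph V) (H : SimpleGraph W) where
  branch : W → Finset V
  port : W → W → V
  connected_branch : ∀ w, (G.induce (branch w : Set V)).Connected
  disjoint_branch : ∀ ⦃w w'⦄, w ≠ w' → Disjoint (branch w) (branch w')
  port_mem : ∀ ⦃w w'⦄, H.Adj w w' → port w w' ∈ branch w
  adj_port : ∀ ⦃w w'⦄, H.Adj w w' → G.Adj (port w w') (port w' w)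

variable {G : SimpleGraph V} {H : SimpleGraph W}

lemma nonempty_minorModel {f : W → Finset V} (hconn : ∀ w, (G.induce (f w : Set V)).Connected)
    (hdisj : ∀ ⦃w w'⦄, w ≠ w' → Disjoint (f w) (f w'))
    (hadj : ∀ ⦃w w'⦄, H.Adj w w' → ∃ u ∈ f w, ∃ v ∈ f w', G.Adj u v) :
    Nonempty (MinorModel G H) := by
  obtain ⟨_, _⟩ := exists_wellFoundedLT W
  have hends (w w' : W) : ∃ u v, H.Adj w w' → u ∈ f w ∧ v ∈ f w' ∧ G.Adj u v := by
    by_cases h : H.Adj w w'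
    · obtain ⟨u, hu, v, hv, huv⟩ := hadj h
      exact ⟨u, v, fun _ ↦ ⟨hu, hv, huv⟩⟩
    · obtain ⟨u⟩ := (hconn w).nonempty
      exact ⟨u, u, fun h' ↦ absurd h' h⟩
  choose u v huv using hends
  refine ⟨f, fun w w' ↦ if w < w' then u w w' else v w' w, hconn, hdisj, fun w w' h ↦ ?_,
    fun w w' h ↦ ?_⟩
  · split_ifs
    exacts [(huv w w' h).1, (huv w' w h.symm).2.1]
  · obtain hlt | hlt := h.ne.lt_or_gt
    · simpa [hlt, hlt.asymm] using (huv w w' h).2.2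
    · simpa [hlt, hlt.asymm] using (huv w' w h.symm).2.2.symm

namespace MinorModel

variable (M : MinorModel G H)

lemma eq_of_mem_branch {w w' : W} {v : V} (h : v ∈ M.branch w) (h' : v ∈ M.branch w') : w = w' := by
  by_contra hne
  exact Finset.disjoint_left.1 (M.disjoint_branch hne) h h'

/-- The edge of `G` chosen to realize an edge of `H`. -/
def portEdge : Sym2 W → Sym2 V :=
  Sym2.lift ⟨fun w w' ↦ s(M.port w w', M.port w' w), fun _ _ ↦ Sym2.eq_swap⟩

lemma portEdge_mk (w w' : W) : M.portEdge s(w, w') = s(M.port w w', M.port w' w) := rfl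

lemma mk_mem_image_portEdge_iff {v u : V} : s(v, u) ∈ M.portEdge '' H.edgeSet ↔
    ∃ w w', H.Adj w w' ∧ M.port w w' = v ∧ M.port w' w = u := by
  refine ⟨?_, fun ⟨w, w', h, hv, hu⟩ ↦ ⟨s(w, w'), h, by rw [portEdge_mk, hv, hu]⟩⟩
  rintro ⟨e, he, heq⟩
  induction e with | _ w w'
  rw [portEdge_mk, Sym2.eq_iff] at heq
  obtain ⟨hv, hu⟩ | ⟨hu, hv⟩ := heq
  exacts [⟨w, w', he, hv, hu⟩, ⟨w', w, (show H.Adj w w' from he).symm, hv, hu⟩]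

lemma portEdge_mem_edgeSet {e : Sym2 W} (he : e ∈ H.edgeSet) : M.portEdge e ∈ G.edgeSet := by
  induction e with | _ w w'
  exact M.adj_port he

/-- The edges of `G` that are contracted when forming `H`. -/
def contractedEdges : Set (Sym2 V) := {g | ∃ w, ∀ v ∈ g, v ∈ M.branch w}

/-- The edges of `G` that are neither contracted nor chosen to realize an edge of `H`. -/
def deletedEdges : Set (Sym2 V) :=
  G.edgeSet \ (M.contractedEdges ∪ M.portEdge '' H.edgeSet)

lemma portEdge_notMem_contractedEdges {e : Sym2 W} (he : e ∈ H.edgeSet) :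
    M.portEdge e ∉ M.contractedEdges := by
  induction e with | _ w w'
  have hadj : H.Adj w w' := he
  rintro ⟨x, hx⟩
  rw [portEdge_mk, Sym2.ball] at hx
  exact hadj.ne ((M.eq_of_mem_branch (M.port_mem hadj) hx.1).trans
    (M.eq_of_mem_branch hx.2 (M.port_mem hadj.symm)))

lemma portEdge_injOn : Set.InjOn M.portEdge H.edgeSet := by
  intro e he e' he' heq
  induction e with | _ a b
  induction e' with | _ c d
  have hab : H.Adj a b := he
  have hcd : H.Adj c d := he'
  have ha := M.port_mem hab
  have hb := M.port_mem hab.symm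
  have hc := M.port_mem hcd
  have hd := M.port_mem hcd.symm
  rw [portEdge_mk, portEdge_mk, Sym2.eq_iff] at heq
  obtain ⟨h₁, h₂⟩ | ⟨h₁, h₂⟩ := heq
  · rw [M.eq_of_mem_branch ha (h₁ ▸ hc), M.eq_of_mem_branch hb (h₂ ▸ hd)]
  · rw [M.eq_of_mem_branch ha (h₁ ▸ hd), M.eq_of_mem_branch hb (h₂ ▸ hc), Sym2.eq_swap]

lemma nonempty_minorModel_induce (M : MinorModel G H) (A : Set V) :
    Nonempty (MinorModel (G.induce Aᶜ) (H.induce {w | Disjoint (M.branch w : Set V) A})) := by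
  classical
  have hA {w : W} (hw : Disjoint (M.branch w : Set V) A) {v : V} (hv : v ∈ M.branch w) : v ∈ Aᶜ :=
    Set.disjoint_left.1 hw hv
  refine nonempty_minorModel (f := fun w ↦ (M.branch w).subtype (· ∈ Aᶜ)) (fun w ↦ ?_)
    (fun w w' hne ↦ ?_) fun w w' h ↦ ?_
  · let toRestriction : G.induce (M.branch w : Set V) →g
        (G.induce Aᶜ).induce ((M.branch w).subtype (· ∈ Aᶜ) : Set (Aᶜ : Set V)) :=
      ⟨fun v ↦ ⟨⟨v, hA w.2 v.2⟩, Finset.mem_subtype.2 v.2⟩, fun h ↦ h⟩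
    exact (M.connected_branch w).map toRestriction
      fun v ↦ ⟨⟨v, Finset.mem_subtype.1 v.2⟩, rfl⟩
  · refine Finset.disjoint_left.2 fun v hv hv' ↦ hne (Subtype.ext ?_)
    exact M.eq_of_mem_branch (Finset.mem_subtype.1 hv) (Finset.mem_subtype.1 hv')
  · have hu := M.port_mem h
    have hv := M.port_mem h.symm
    exact ⟨⟨_, hA w.2 hu⟩, Finset.mem_subtype.2 hu, ⟨_, hA w'.2 hv⟩, Finset.mem_subtype.2 hv,
      M.adj_port h⟩

variable [G.LocallyFinite] [H.LocallyFinite]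

lemma sum_branch_chainBoundary {c : Sym2 V → ZMod 2} (hc : ∀ g ∈ M.deletedEdges, c g = 0) (w : W) :
    ∑ v ∈ M.branch w, chainBoundary G c v = chainBoundary H (c ∘ M.portEdge) w := by
  classical
  rw [sum_chainBoundary, Finset.sum_sigma', chainBoundary_apply]
  refine (Finset.sum_of_injOn (fun w' ↦ ⟨M.port w w', M.port w' w⟩) ?_ ?_ ?_ ?_).symm
  · intro a ha b hb hab
    rw [Finset.mem_coe, mem_neighborFinset] at ha hb
    have hport : M.port a w = M.port b w := congrArg Sigma.snd hab
    exact M.eq_of_mem_branch (M.port_mem ha.symm) (hport ▸ M.port_mem hb.symm)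
  · intro a ha
    rw [Finset.mem_coe, mem_neighborFinset] at ha
    simp only [Finset.coe_sigma, Set.mem_sigma_iff, Finset.mem_coe, Finset.mem_sdiff,
      mem_neighborFinset]
    exact ⟨M.port_mem ha, M.adj_port ha,
      fun h ↦ ha.ne (M.eq_of_mem_branch h (M.port_mem ha.symm))⟩
  · rintro ⟨v, u⟩ hvu hrange
    simp only [Finset.mem_sigma, Finset.mem_sdiff, mem_neighborFinset] at hvu
    obtain ⟨hv, hadj, hu⟩ := hvu
    refine hc _ ⟨hadj, ?_⟩
    rintro (⟨x, hx⟩ | himage)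
    · rw [Sym2.ball] at hx
      exact hu (M.eq_of_mem_branch hx.1 hv ▸ hx.2)
    · obtain ⟨a, b, hab, rfl, rfl⟩ := M.mk_mem_image_portEdge_iff.1 himage
      obtain rfl := M.eq_of_mem_branch hv (M.port_mem hab)
      exact hrange ⟨b, by simpa using hab, rfl⟩
  · exact fun _ _ ↦ rfl

lemma chainBoundary_comp_portEdge_eq_zero {c : Sym2 V → ZMod 2}
    (hc : ∀ g ∈ M.deletedEdges, c g = 0) (hcycle : chainBoundary G c = 0) :
    chainBoundary H (c ∘ M.portEdge) = 0 := by
  ext w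
  rw [← M.sum_branch_chainBoundary hc, hcycle]
  exact Finset.sum_const_zero

lemma exists_chainBoundary_eq_of_forall_portEdge [Finite W] (c : Sym2 V → ZMod 2)
    (hc : ∀ g, c g ≠ 0 → g ∈ M.portEdge '' H.edgeSet)
    (hcycle : chainBoundary H (c ∘ M.portEdge) = 0) :
    ∃ d : Sym2 V → ZMod 2, (∀ g ∉ M.contractedEdges, d g = 0) ∧
      chainBoundary G d = chainBoundary G c := by
  classical
  have := Fintype.ofFinite W
  have hjoin (w : W) : ∃ d : Sym2 V → ZMod 2, (∀ g, d g ≠ 0 → ∀ v ∈ g, v ∈ M.branch w) ∧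
      chainBoundary G d = Set.indicator (M.branch w) (chainBoundary G c) := by
    refine exists_chainBoundary_eq (M.connected_branch w).preconnected
      (fun v hv ↦ Set.indicator_of_notMem hv _) ?_
    rw [Finset.sum_congr rfl fun v hv ↦ Set.indicator_of_mem (Finset.mem_coe.2 hv) _,
      M.sum_branch_chainBoundary, hcycle, Pi.zero_apply]
    exact fun g hg ↦ by_contra fun hne ↦ hg.2 (Or.inr (hc g hne))
  choose d hd hd' using hjoin
  refine ⟨∑ w, d w, fun g hg ↦ ?_, ?_⟩
  · rw [Finset.sum_apply]
    exact Finset.sum_eq_zero fun w _ ↦ by_contra fun hne ↦ hg ⟨w, hd w g hne⟩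
  rw [map_sum, Finset.sum_congr rfl fun w _ ↦ hd' w]
  ext v
  rw [Finset.sum_apply]
  by_cases hv : ∃ w, v ∈ M.branch w
  · obtain ⟨w, hw⟩ := hv
    rw [Finset.sum_eq_single_of_mem w (Finset.mem_univ w), Set.indicator_of_mem hw]
    exact fun w' _ hne ↦ Set.indicator_of_notMem (fun h ↦ hne (M.eq_of_mem_branch h hw)) _
  · push Not at hv
    rw [Finset.sum_eq_zero fun w _ ↦ Set.indicator_of_notMem (hv w) _, chainBoundary_apply]
    refine (Finset.sum_eq_zero fun u _ ↦ by_contra fun hne ↦ ?_).symm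
    obtain ⟨w, w', h, rfl, -⟩ := M.mk_mem_image_portEdge_iff.1 (hc _ hne)
    exact hv w (M.port_mem h)

lemma exists_cycle_lift [Finite W] {y : Sym2 W → ZMod 2} (hy : chainBoundary H y = 0) :
    ∃ z : Sym2 V → ZMod 2, chainBoundary G z = 0 ∧ (∀ e ∈ H.edgeSet, z (M.portEdge e) = y e) ∧
      ∀ g ∈ M.deletedEdges, z g = 0 := by
  classical
  set z₀ := Function.extend (fun e : H.edgeSet ↦ M.portEdge e) (fun e ↦ y e) 0
  have hz₀_port (e) (he : e ∈ H.edgeSet) : z₀ (M.portEdge e) = y e :=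
    M.portEdge_injOn.injective.extend_apply _ _ ⟨e, he⟩
  have hz₀_supp (g) (hg : g ∉ M.portEdge '' H.edgeSet) : z₀ g = 0 :=
    Function.extend_apply' _ _ _ fun ⟨e, he⟩ ↦ hg ⟨e, e.2, he⟩
  obtain ⟨d, hd, hd'⟩ := M.exists_chainBoundary_eq_of_forall_portEdge z₀
    (fun g hg ↦ by_contra fun h ↦ hg (hz₀_supp g h))
    ((chainBoundary_congr hz₀_port).trans hy)
  refine ⟨z₀ + d, ?_, fun e he ↦ ?_, fun g hg ↦ ?_⟩
  · rw [map_add, hd']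
    exact funext fun v ↦ CharTwo.add_self_eq_zero _
  · rw [Pi.add_apply, hz₀_port e he, hd _ (M.portEdge_notMem_contractedEdges he), add_zero]
  · obtain ⟨-, hg⟩ := hg
    rw [Pi.add_apply, hz₀_supp g fun h ↦ hg (Or.inr h), hd g fun h ↦ hg (Or.inl h), add_zero]

/-- Contracting an edge deletes it from the dual and vice versa: the faces of the minor are obtained
by identifying those of `G` across the deleted edges. -/
theorem hasAbstractDual [Finite W] (M : MinorModel G H) (h : HasAbstractDual G) :
    HasAbstractDual H := by
  obtain ⟨F, l, r, h⟩ := h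
  let merge : F → Quot fun a b ↦ ∃ g ∈ M.deletedEdges, a = l g ∧ b = r g := Quot.mk _
  have hmerge (g) (hg : g ∈ M.deletedEdges) : merge (l g) = merge (r g) :=
    Quot.sound ⟨g, hg, rfl, rfl⟩
  refine ⟨_, merge ∘ l ∘ M.portEdge, merge ∘ r ∘ M.portEdge, fun y ↦ ⟨fun hy ↦ ?_, ?_⟩⟩
  · obtain ⟨z, hz, hzy, hzdel⟩ := M.exists_cycle_lift hy
    obtain ⟨x, hx⟩ := (h z).1 hz
    have hx_merge : ∀ a b, (∃ g ∈ M.deletedEdges, a = l g ∧ b = r g) → x a = x b := by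
      rintro _ _ ⟨g, hg, rfl, rfl⟩
      exact CharTwo.add_eq_zero.1 ((hx g hg.1).symm.trans (hzdel g hg))
    exact ⟨Quot.lift x hx_merge, fun e he ↦
      (hzy e he).symm.trans (hx _ (M.portEdge_mem_edgeSet he))⟩
  · rintro ⟨x, hx⟩
    have hcycle := (h fun g ↦ x (merge (l g)) + x (merge (r g))).2 ⟨x ∘ merge, fun _ _ ↦ rfl⟩
    rw [chainBoundary_congr hx]
    exact M.chainBoundary_comp_portEdge_eq_zero
      (fun g hg ↦ by rw [hmerge g hg, CharTwo.add_self_eq_zero]) hcycle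

end MinorModel

end Minor

section QuadrantGrid

instance : (hasse ℕ).LocallyFinite := fun n ↦
  Fintype.ofFinset {m ∈ Finset.range (n + 2) | n = m + 1 ∨ m = n + 1} fun m ↦ by
    simp only [Finset.mem_filter, Finset.mem_range, mem_neighborSet, hasse_adj,
      Nat.covBy_iff_add_one_eq]
    lia

lemma chainBoundary_hasse_nat_zero (c : Sym2 ℕ → ZMod 2) :
    chainBoundary (hasse ℕ) c 0 = c s(0, 1) := by
  have hN : (hasse ℕ).neighborFinset 0 = {1} := by
    ext; simp [hasse_adj, Nat.covBy_iff_add_one_eq, eq_comm]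
  rw [chainBoundary_apply, hN, Finset.sum_singleton]

lemma chainBoundary_hasse_nat_succ (c : Sym2 ℕ → ZMod 2) (n : ℕ) :
    chainBoundary (hasse ℕ) c (n + 1) = c s(n, n + 1) + c s(n + 1, n + 2) := by
  have hN : (hasse ℕ).neighborFinset (n + 1) = {n, n + 2} := by
    ext
    simp only [mem_neighborFinset, hasse_adj, Nat.covBy_iff_add_one_eq, Nat.add_right_cancel_iff,
      Finset.mem_insert, Finset.mem_singleton]
    lia
  rw [chainBoundary_apply, hN, Finset.sum_pair (by lia), Sym2.eq_swap]

lemma chainBoundary_boxProd {V W : Type*} (G : SimpleGraph V) (H : SimpleGraph W)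
    [G.LocallyFinite] [H.LocallyFinite] (c : Sym2 (V × W) → ZMod 2) (v : V) (w : W) :
    chainBoundary (G □ H) c (v, w) =
      chainBoundary G (c ∘ Sym2.map (·, w)) v + chainBoundary H (c ∘ Sym2.map (v, ·)) w := by
  rw [chainBoundary_apply, neighborFinset_boxProd, Finset.sum_disjUnion, Finset.sum_product,
    Finset.sum_product]
  simp [chainBoundary_apply]

/-- The infinite grid on the quadrant `ℕ × ℕ`. -/
abbrev quadrantGrid : SimpleGraph (ℕ × ℕ) := hasse ℕ □ hasse ℕ

lemma forall_mem_edgeSet_quadrantGrid {P : Sym2 (ℕ × ℕ) → Prop} :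
    (∀ e ∈ quadrantGrid.edgeSet, P e) ↔
      (∀ i j, P s((i, j), (i, j + 1))) ∧ ∀ i j, P s((i, j), (i + 1, j)) := by
  refine ⟨fun h ↦ ⟨fun i j ↦ h _ ?_, fun i j ↦ h _ ?_⟩, fun ⟨hrow, hcol⟩ e he ↦ ?_⟩
  · simp [hasse_adj, Nat.covBy_iff_add_one_eq]
  · simp [hasse_adj, Nat.covBy_iff_add_one_eq]
  induction e with | _ p q
  obtain ⟨i, j⟩ := p
  obtain ⟨i', j'⟩ := q
  simp only [mem_edgeSet, boxProd_adj, hasse_adj, Nat.covBy_iff_add_one_eq] at he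
  obtain ⟨rfl | rfl, rfl⟩ | ⟨rfl | rfl, rfl⟩ := he
  exacts [hcol i j, Sym2.eq_swap ▸ hcol i' j, hrow i j, Sym2.eq_swap ▸ hrow i j']

/-- The face of the quadrant grid around the unit square with upper right corner `p`; all squares
outside the quadrant belong to the outer face, labelled `(0, 0)`. -/
def gridFace : ℕ × ℕ → ℕ × ℕ
  | (i + 1, j + 1) => (i + 1, j + 1)
  | _ => (0, 0)

/-- The potential of a cycle `c` of the quadrant grid on the faces: cross the squares from the
outer face upwards to the face with upper right corner `p`. -/
def gridPotential (c : Sym2 (ℕ × ℕ) → ZMod 2) : ℕ × ℕ → ZMod 2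
  | (_, 0) => 0
  | (i, j + 1) => ∑ a ∈ Finset.range i, c s((a, j), (a, j + 1))

lemma gridPotential_gridFace (c : Sym2 (ℕ × ℕ) → ZMod 2) (p : ℕ × ℕ) :
    gridPotential c (gridFace p) = gridPotential c p := by
  obtain ⟨_ | i, _ | j⟩ := p <;> rfl

lemma gridPotential_add_gridPotential {c : Sym2 (ℕ × ℕ) → ZMod 2}
    (hc : chainBoundary quadrantGrid c = 0) (i j : ℕ) :
    c s((i, j), (i + 1, j)) = gridPotential c (i + 1, j) + gridPotential c (i + 1, j + 1) := by
  induction i with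
  | zero =>
    have hv := congrFun hc (0, j)
    rcases j with _ | j <;>
      simp only [chainBoundary_boxProd, chainBoundary_hasse_nat_zero, chainBoundary_hasse_nat_succ,
        Function.comp_apply, Sym2.map_mk, Pi.zero_apply, gridPotential,
        Finset.sum_range_succ, Finset.sum_range_zero] at hv ⊢ <;>
      grind
  | succ i ih =>
    have hv := congrFun hc (i + 1, j)
    rcases j with _ | j <;>
      simp only [chainBoundary_boxProd, chainBoundary_hasse_nat_zero, chainBoundary_hasse_nat_succ,
        Function.comp_apply, Sym2.map_mk, Pi.zero_apply, gridPotential,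
        Finset.sum_range_succ] at hv ih ⊢ <;>
      grind

lemma isAbstractDual_quadrantGrid :
    IsAbstractDual quadrantGrid (fun e ↦ gridFace e.sup) fun e ↦ gridFace (e.inf + (1, 1)) := by
  intro c
  simp only [forall_mem_edgeSet_quadrantGrid, Sym2.sup_mk, Sym2.inf_mk, Prod.mk_sup_mk,
    Prod.mk_inf_mk, sup_idem, inf_idem, Nat.le_add_right, sup_of_le_right, inf_of_le_left,
    Prod.mk_add_mk]
  constructor
  · refine fun hc ↦ ⟨gridPotential c, fun i j ↦ ?_, fun i j ↦ ?_⟩ <;>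
      simp only [gridPotential_gridFace]
    · simp only [gridPotential, Finset.sum_range_succ]
      grind
    · exact gridPotential_add_gridPotential hc i j
  · rintro ⟨x, hrow, hcol⟩
    ext ⟨_ | i, _ | j⟩ <;>
      simp only [chainBoundary_boxProd, chainBoundary_hasse_nat_zero, chainBoundary_hasse_nat_succ,
        Function.comp_apply, Sym2.map_mk, Pi.zero_apply, hrow, hcol, gridFace] <;>
      grind

lemma hasAbstractDual_quadrantGrid : HasAbstractDual quadrantGrid :=
  ⟨_, _, _, isAbstractDual_quadrantGrid⟩

end QuadrantGrid

section MinorDensity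

lemma card_edgeSet_le_card_edgeSet_induce_compl_add {W : Type*} [Finite W] (H : SimpleGraph W)
    (B : Finset W) : Nat.card H.edgeSet ≤
      Nat.card (H.induce (B : Set W)ᶜ).edgeSet + B.card * (Nat.card W - 1) := by
  classical
  have := Fintype.ofFinite W
  have hcover : H.edgeFinset ⊆
      (H.induce (B : Set W)ᶜ).edgeFinset.image (Sym2.map Subtype.val) ∪
        B.biUnion (H.incidenceFinset ·) := by
    intro e he
    rw [mem_edgeFinset] at he
    by_cases hB : ∃ w ∈ B, w ∈ e
    · obtain ⟨w, hw, hwe⟩ := hB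
      exact Finset.mem_union_right _
        (Finset.mem_biUnion.2 ⟨w, hw, (H.mem_incidenceFinset w e).2 ⟨he, hwe⟩⟩)
    · push Not at hB
      induction e with | _ u v
      refine Finset.mem_union_left _ (Finset.mem_image.2
        ⟨s(⟨u, fun h ↦ hB u h (by simp)⟩, ⟨v, fun h ↦ hB v h (by simp)⟩), ?_, rfl⟩)
      exact mem_edgeFinset.2 he
  have hincidence : (B.biUnion (H.incidenceFinset ·)).card ≤ B.card * (Fintype.card W - 1) :=
    Finset.card_biUnion_le_card_mul _ _ _ fun w _ ↦ by
      rw [card_incidenceFinset_eq_degree]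
      exact Nat.le_sub_one_of_lt (H.degree_lt_card_verts w)
  simp only [Nat.card_eq_fintype_card, ← edgeFinset_card]
  exact (Finset.card_le_card hcover).trans ((Finset.card_union_le _ _).trans
    (Nat.add_le_add Finset.card_image_le hincidence))

namespace MinorModel

universe u

variable {V W : Type u} {G : SimpleGraph V} {H : SimpleGraph W} (M : MinorModel G H)

lemma card_filter_not_disjoint_le [DecidableEq V] [Fintype W] (A : Finset V) :
    Finset.card {w | ¬ Disjoint (M.branch w) A} ≤ A.card := by
  refine Finset.card_le_card_of_forall_subsingleton (fun w v ↦ v ∈ M.branch w) (fun w hw ↦ ?_)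
    fun v _ w hw w' hw' ↦ M.eq_of_mem_branch hw.2 hw'.2
  obtain ⟨v, hv, hvA⟩ := Finset.not_disjoint_iff.1 (Finset.mem_filter.1 hw).2
  exact ⟨v, hvA, hv⟩

lemma card_le [Finite V] (M : MinorModel G H) : Nat.card W ≤ Nat.card V :=
  Nat.card_le_card_of_injective (fun w ↦ (M.connected_branch w).nonempty.some.1) fun w w' h ↦
    M.eq_of_mem_branch (M.connected_branch w).nonempty.some.2 <| by
      dsimp only at h
      exact h ▸ (M.connected_branch w').nonempty.some.2

theorem card_edgeSet_lt [Finite W] [Nonempty W] (M : MinorModel G H) (A : Finset V)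
    [(G.induce (A : Set V)ᶜ).LocallyFinite] (hA : HasAbstractDual (G.induce (A : Set V)ᶜ)) :
    Nat.card H.edgeSet < (A.card + 3) * Nat.card W := by
  classical
  have := Fintype.ofFinite W
  set B : Finset W := {w | ¬ Disjoint (M.branch w) A} with hB
  have hset : {w | Disjoint (M.branch w : Set V) A} = (B : Set W)ᶜ := by
    ext; simp [hB]
  obtain ⟨N⟩ := M.nonempty_minorModel_induce A
  rw [hset] at N
  have hplanar : Nat.card (H.induce (B : Set W)ᶜ).edgeSet < 3 * Nat.card W := by
    obtain _ | _ := isEmpty_or_nonempty ((B : Set W)ᶜ : Set W)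
    · simp [Fintype.card_pos]
    · have hdual := (N.hasAbstractDual hA).card_edgeSet_add_three_le
      have hle := Finite.card_subtype_le (· ∈ (B : Set W)ᶜ)
      lia
  calc Nat.card H.edgeSet
      ≤ Nat.card (H.induce (B : Set W)ᶜ).edgeSet + B.card * (Nat.card W - 1) :=
        card_edgeSet_le_card_edgeSet_induce_compl_add H B
    _ < 3 * Nat.card W + A.card * Nat.card W :=
        add_lt_add_of_lt_of_le hplanar
          (Nat.mul_le_mul (M.card_filter_not_disjoint_le A) (Nat.sub_le _ _))
    _ = (A.card + 3) * Nat.card W := by ring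

end MinorModel

lemma IsMinor.nonempty_minorModel {V W : Type} [Finite V] {G : SimpleGraph V} {H : SimpleGraph W}
    (h : IsMinor G H) : Nonempty (MinorModel G H) := by
  obtain ⟨f, -, hconn, hdisj, hadj⟩ := h
  lift f to W → Finset V using fun w ↦ Set.toFinite _
  exact _root_.nonempty_minorModel hconn (fun w w' hne ↦ Finset.disjoint_coe.1 (hdisj hne))
    fun w w' h ↦ hadj w w' h

variable {V : Type} {G : SimpleGraph V}

lemma finite_setOf_minor_density [Finite V] :
    {d : ℝ | ∃ (W : Type) (_ : Fintype W) (H : SimpleGraph W),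
      IsMinor G H ∧ d = (Nat.card H.edgeSet : ℝ) / (Nat.card W : ℝ)}.Finite := by
  classical
  refine ((Set.finite_Iic ((Nat.card V).choose 2)).prod (Set.finite_Iic (Nat.card V))).image
    (fun p : ℕ × ℕ ↦ (p.1 : ℝ) / p.2) |>.subset ?_
  rintro _ ⟨W, _, H, hH, rfl⟩
  obtain ⟨M⟩ := hH.nonempty_minorModel
  refine ⟨(Nat.card H.edgeSet, Nat.card W), ⟨?_, M.card_le⟩, rfl⟩
  have hedges := H.card_edgeFinset_le_card_choose_two
  rw [edgeFinset_card, ← Nat.card_eq_fintype_card, ← Nat.card_eq_fintype_card] at hedges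
  exact hedges.trans (Nat.choose_le_choose 2 M.card_le)

lemma minorDensity_lt_iff [Fintype V] {c : ℝ} : minorDensity G < c ↔
    ∀ (W : Type) (_ : Fintype W) (H : SimpleGraph W), IsMinor G H →
      (Nat.card H.edgeSet : ℝ) / (Nat.card W : ℝ) < c := by
  have hempty : IsMinor G (⊥ : SimpleGraph Empty) :=
    ⟨Empty.elim, fun w ↦ w.elim, fun w ↦ w.elim, fun w ↦ w.elim, fun w ↦ w.elim⟩
  rw [minorDensity,
    finite_setOf_minor_density.csSup_lt_iff ⟨_, Empty, inferInstance, ⊥, hempty, rfl⟩]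
  exact ⟨fun h W hW H hH ↦ h _ ⟨W, hW, H, hH, rfl⟩, fun h d ⟨W, hW, H, hH, hd⟩ ↦ hd ▸ h W hW H hH⟩

theorem minorDensity_lt_of_hasAbstractDual_induce_compl [Fintype V] (A : Finset V)
    [(G.induce (A : Set V)ᶜ).LocallyFinite] (hA : HasAbstractDual (G.induce (A : Set V)ᶜ)) :
    minorDensity G < A.card + 3 := by
  refine minorDensity_lt_iff.2 fun W _ H hH ↦ ?_
  obtain ⟨M⟩ := hH.nonempty_minorModel
  obtain _ | _ := isEmpty_or_nonempty W
  · rw [Nat.card_of_isEmpty (α := W), Nat.cast_zero, div_zero]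
    positivity
  · rw [div_lt_iff₀ (Nat.cast_pos.2 Nat.card_pos)]
    exact_mod_cast M.card_edgeSet_lt A hA

end MinorDensity

section GDK

variable {δ k : ℕ}

lemma gdk_adj_inl_inl {a b : Fin ((δ - 1) * k + 1)} :
    (GDK δ k).Adj (Sum.inl a) (Sum.inl b) ↔ (b : ℕ) = a + 1 ∨ (a : ℕ) = b + 1 := by
  simp only [GDK, fromRel_adj, ne_eq, Sum.inl.injEq, and_iff_right_iff_imp]
  lia

lemma gdk_adj_inr_inr {i j i' j' : Fin ((δ - 1) * (k * δ) + 1)}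
    (h : (GDK δ k).Adj (Sum.inr (i, j)) (Sum.inr (i', j'))) :
    quadrantGrid.Adj (i + 1, j + 1) (i' + 1, j' + 1) := by
  simp only [GDK, fromRel_adj, ne_eq, Sum.inr.injEq, Prod.mk.injEq, not_and, boxProd_adj, hasse_adj,
    Nat.covBy_iff_add_one_eq, Nat.add_right_cancel_iff] at h ⊢
  lia

lemma gdk_adj_inr_inl {i j : Fin ((δ - 1) * (k * δ) + 1)} {q : Fin ((δ - 1) * k + 1)} :
    (GDK δ k).Adj (Sum.inr (i, j)) (Sum.inl q) ↔
      k * δ ∣ i ∧ k * δ ∣ j ∧ (q : ℕ) * (k * δ) = j * k := by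
  simp [GDK]

/-- The vertices of the top path of `G(δ,k)`, other than its first vertex, which have neighbours in
the rows. -/
def gdkApices (δ k : ℕ) : Finset (GDKVert δ k) :=
  (Finset.univ : Finset (Fin (δ - 1))).image fun m ↦
    Sum.inl ⟨(↑m + 1) * k, Nat.lt_succ_of_le (Nat.mul_le_mul_right k (Nat.succ_le_of_lt m.isLt))⟩

lemma card_gdkApices_le (δ k : ℕ) : (gdkApices δ k).card ≤ δ - 1 :=
  Finset.card_image_le.trans_eq (Finset.card_fin _)

/-- The columns of `G(δ,k)` lie at multiples `m * (k * δ)` with `m ≤ δ - 1`, and their neighbour on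
the top path is `p_{m k}`. -/
lemma gdk_adj_inr_inl_of_notMem {i j : Fin ((δ - 1) * (k * δ) + 1)} {q : Fin ((δ - 1) * k + 1)}
    (h : (GDK δ k).Adj (Sum.inr (i, j)) (Sum.inl q)) (hq : Sum.inl q ∉ gdkApices δ k) :
    (q : ℕ) = 0 ∧ (j : ℕ) = 0 := by
  obtain ⟨-, ⟨m, hm⟩, hqj⟩ := gdk_adj_inr_inl.1 h
  obtain hD | hD := Nat.eq_zero_or_pos (k * δ)
  · have hj : (j : ℕ) = 0 := by rw [hm, hD, zero_mul]
    have hq : (δ - 1) * k = 0 := by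
      obtain rfl | rfl := Nat.mul_eq_zero.1 hD <;> simp
    exact ⟨by lia, hj⟩
  have hqm : (q : ℕ) = m * k :=
    Nat.eq_of_mul_eq_mul_right hD (by rw [hqj, hm]; ring)
  have hmδ : m ≤ δ - 1 :=
    Nat.le_of_mul_le_mul_left ((hm ▸ j.is_le).trans_eq (mul_comm _ _)) hD
  rcases m with _ | m
  · exact ⟨by simpa using hqm, by simpa using hm⟩
  · refine absurd (Finset.mem_image.2 ⟨⟨m, hmδ⟩, Finset.mem_univ _, ?_⟩) hq
    exact congrArg Sum.inl (Fin.ext hqm.symm)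

/-- The branch sets of a model of `G(δ,k) - gdkApices δ k` in the quadrant grid: the rows are
placed at `(i + 1, j + 1)`, the top path runs along the first row of the quadrant, and its first
vertex is expanded to the first column. -/
def gdkGridBranch : GDKVert δ k → Finset (ℕ × ℕ)
  | Sum.inl q => if (q : ℕ) = 0 then Finset.range ((δ - 1) * (k * δ) + 2) ×ˢ {0} else {(0, ↑q)}
  | Sum.inr (i, j) => {(↑i + 1, ↑j + 1)}

lemma gdkGridBranch_inl_of_eq_zero {q : Fin ((δ - 1) * k + 1)} (hq : (q : ℕ) = 0) :
    gdkGridBranch (Sum.inl q : GDKVert δ k) = Finset.range ((δ - 1) * (k * δ) + 2) ×ˢ {0} :=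
  if_pos hq

lemma gdkGridBranch_inl_of_ne_zero {q : Fin ((δ - 1) * k + 1)} (hq : (q : ℕ) ≠ 0) :
    gdkGridBranch (Sum.inl q : GDKVert δ k) = {(0, (q : ℕ))} :=
  if_neg hq

lemma zero_mk_mem_gdkGridBranch (q : Fin ((δ - 1) * k + 1)) :
    (0, (q : ℕ)) ∈ gdkGridBranch (Sum.inl q : GDKVert δ k) := by
  by_cases hq : (q : ℕ) = 0
  · simp [gdkGridBranch_inl_of_eq_zero hq, hq]
  · simp [gdkGridBranch_inl_of_ne_zero hq]

lemma connected_induce_range_prod_singleton (n b : ℕ) :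
    (quadrantGrid.induce (Finset.range (n + 1) ×ˢ {b} : Finset (ℕ × ℕ))).Connected := by
  let column : pathGraph (n + 1) →g
      quadrantGrid.induce (Finset.range (n + 1) ×ˢ {b} : Finset (ℕ × ℕ)) :=
    { toFun := fun a ↦ ⟨(a, b), by simpa using a.is_le⟩
      map_rel' := by simp [pathGraph_adj, hasse_adj, Nat.covBy_iff_add_one_eq] }
  refine (pathGraph_connected n).map column ?_
  rintro ⟨⟨a, b'⟩, h⟩
  simp only [Finset.coe_product, Set.mem_prod, Finset.mem_coe, Finset.mem_range,
    Finset.mem_singleton] at h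
  obtain ⟨ha, rfl⟩ := h
  exact ⟨⟨a, ha⟩, rfl⟩

lemma connected_gdkGridBranch (x : GDKVert δ k) :
    (quadrantGrid.induce (gdkGridBranch x : Set (ℕ × ℕ))).Connected := by
  have hsingleton (p : ℕ × ℕ) :
      (quadrantGrid.induce (({p} : Finset (ℕ × ℕ)) : Set (ℕ × ℕ))).Connected := by
    rw [Finset.coe_singleton, induce_singleton_eq_top]
    exact connected_top
  obtain q | ⟨i, j⟩ := x
  · by_cases hq : (q : ℕ) = 0
    · rw [gdkGridBranch_inl_of_eq_zero hq]
      exact connected_induce_range_prod_singleton _ 0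
    · rw [gdkGridBranch_inl_of_ne_zero hq]
      exact hsingleton _
  · exact hsingleton _

lemma disjoint_gdkGridBranch {x y : GDKVert δ k} (hxy : x ≠ y) :
    Disjoint (gdkGridBranch x) (gdkGridBranch y) := by
  refine Finset.disjoint_left.2 ?_
  rintro ⟨a, b⟩ ha hb
  obtain q | ⟨i, j⟩ := x <;> obtain q' | ⟨i', j'⟩ := y <;>
    simp only [gdkGridBranch] at ha hb <;> grind

lemma exists_quadrantGrid_adj_of_gdk_adj {x y : GDKVert δ k} (hx : x ∉ gdkApices δ k)
    (hy : y ∉ gdkApices δ k) (h : (GDK δ k).Adj x y) :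
    ∃ u ∈ gdkGridBranch x, ∃ v ∈ gdkGridBranch y, quadrantGrid.Adj u v := by
  obtain q | ⟨i, j⟩ := x <;> obtain q' | ⟨i', j'⟩ := y
  · refine ⟨_, zero_mk_mem_gdkGridBranch q, _, zero_mk_mem_gdkGridBranch q', ?_⟩
    rw [boxProd_adj_right, hasse_adj, Nat.covBy_iff_add_one_eq, Nat.covBy_iff_add_one_eq]
    exact (gdk_adj_inl_inl.1 h).imp Eq.symm Eq.symm
  · obtain ⟨hq, hj⟩ := gdk_adj_inr_inl_of_notMem h.symm hx
    refine ⟨(i' + 1, 0), ?_, _, Finset.mem_singleton_self _, ?_⟩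
    · simpa [gdkGridBranch_inl_of_eq_zero hq] using i'.is_le
    · simp [hasse_adj, Nat.covBy_iff_add_one_eq, hj]
  · obtain ⟨hq, hj⟩ := gdk_adj_inr_inl_of_notMem h hy
    refine ⟨_, Finset.mem_singleton_self _, (i + 1, 0), ?_, ?_⟩
    · simpa [gdkGridBranch_inl_of_eq_zero hq] using i.is_le
    · simp [hasse_adj, Nat.covBy_iff_add_one_eq, hj]
  · exact ⟨_, Finset.mem_singleton_self _, _, Finset.mem_singleton_self _, gdk_adj_inr_inr h⟩

theorem nonempty_minorModel_quadrantGrid_gdk (δ k : ℕ) :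
    Nonempty (MinorModel quadrantGrid ((GDK δ k).induce (gdkApices δ k : Set (GDKVert δ k))ᶜ)) :=
  nonempty_minorModel (f := fun x ↦ gdkGridBranch (x : GDKVert δ k))
    (fun _ ↦ connected_gdkGridBranch _)
    (fun _ _ hne ↦ disjoint_gdkGridBranch (Subtype.coe_injective.ne hne))
    fun x y ↦ exists_quadrantGrid_adj_of_gdk_adj x.2 y.2

end GDK

theorem gdk_minor_density_lt_general (δ k : ℕ) (hδ : 1 ≤ δ) :
    (∀ (W : Type) (_ : Fintype W) (H : SimpleGraph W), IsMinor (GDK δ k) H →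
      (Nat.card H.edgeSet : ℝ) / (Nat.card W : ℝ) < (δ : ℝ) + 2) ∧
    minorDensity (GDK δ k) < (δ : ℝ) + 2 := by
  classical
  suffices h : minorDensity (GDK δ k) < (δ : ℝ) + 2 from ⟨minorDensity_lt_iff.1 h, h⟩
  obtain ⟨M⟩ := nonempty_minorModel_quadrantGrid_gdk δ k
  have hA : ((gdkApices δ k).card : ℝ) ≤ δ - 1 := by
    rw [← Nat.cast_pred hδ]
    exact_mod_cast card_gdkApices_le δ k
  calc minorDensity (GDK δ k) < (gdkApices δ k).card + 3 :=
        minorDensity_lt_of_hasAbstractDual_induce_compl _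
          (M.hasAbstractDual hasAbstractDual_quadrantGrid)
    _ ≤ δ + 2 := by linarith

/-- **Claim.** For `δ ≥ 3` and `k ≥ 2`, every minor of `G(δ,k)` has edge density strictly
less than `δ + 2`; that is, the minor density satisfies `δ(G(δ,k)) < δ + 2`. -/
theorem gdk_minor_density_lt (δ k : ℕ) (hδ : 3 ≤ δ) (hk : 2 ≤ k) :
    (∀ (W : Type) (_ : Fintype W) (H : SimpleGraph W), IsMinor (GDK δ k) H →
      (Nat.card H.edgeSet : ℝ) / (Nat.card W : ℝ) < (δ : ℝ) + 2) ∧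
    minorDensity (GDK δ k) < (δ : ℝ) + 2 :=
  gdk_minor_density_lt_general δ k (by lia)
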